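/- Let κ > 1 and let μ satisfy κ^{2/3} ≤ μ ≤ (κ²+1)²/(κ⁴+κ²+1). Define v₁,…,v₁₂ as in the construction below and let S = conv{v₁, v₂, …, v₁₂} be their convex hull. Then Ãv_i ∈ S and B̃v_i ∈ S for all i = 1, 2, …, 12; consequently Ã(S) ⊆ S and B̃(S) ⊆ S. -/

import Mathlib

/-!
Put `c = κ^(-2/3)` and `s = κ^(2/3)`, so that `c * s = 1` and `c³ κ² = 1`. Up to sign, `Ã` and `B̃`
map each vertex to a vertex or to a multiple of one with factor `κ⁻²`, apart from the four images
`Ãv₄, Ãv₆, B̃v₁, B̃v₃`. Since `S` is convex and symmetric about the origin, it suffices to write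
each of these as `±(α p + β q)` with `p, q ∈ S`, `α, β ≥ 0` and `α + β ≤ 1`:

* `Ãv₄ = κ⁻⁴ (-v₆) + ((κ⁴-1)/(κ⁴μ)) (-v₅)`, which needs `1 ≤ μ`;
* `Ãv₆ = κ⁻⁴ v₂ + (s(κ⁴-1)/(μκ⁴)) v₃`, which needs `s ≤ μ`;
* `B̃v₃ = -((μ(κ⁶-1)/(κ⁴(κ²+1))) v₆ + κ⁻⁴ v₅)`, which needs `μ ≤ (κ²+1)²/(κ⁴+κ²+1)`;
* `B̃v₁ = -((cμ(κ⁶-1)/(κ⁴(κ²+1))) v₂ + κ⁻⁴ v₃)`, which needs `c ≤ 1` and the same upper bound.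

Invariance of `S` follows because the preimage of a convex set under a linear map is convex.
-/

open Matrix

open Matrix

/-- A = [[0, −1/κ],[κ, −1]]. -/
noncomputable def matA (κ : ℝ) : Matrix (Fin 2) (Fin 2) ℝ := !![0, -(1 / κ); κ, -1]

/-- B = [[0, −κ],[1/κ, −1]]. -/
noncomputable def matB (κ : ℝ) : Matrix (Fin 2) (Fin 2) ℝ := !![0, -κ; 1 / κ, -1]

/-- Ã = κ^{−2/3} A. -/
noncomputable def tA (κ : ℝ) : Matrix (Fin 2) (Fin 2) ℝ := κ ^ (-(2 : ℝ) / 3) • matA κ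

/-- B̃ = κ^{−2/3} B. -/
noncomputable def tB (κ : ℝ) : Matrix (Fin 2) (Fin 2) ℝ := κ ^ (-(2 : ℝ) / 3) • matB κ

/-- v₁ = μ·(1, κ/(1+κ²)). -/
noncomputable def pv1 (κ μ : ℝ) : Fin 2 → ℝ := μ • ![1, κ / (1 + κ ^ 2)]

/-- v₂ = (1,0). -/
noncomputable def pv2 : Fin 2 → ℝ := ![1, 0]

/-- v₃ = −Ãv₁. -/
noncomputable def pv3 (κ μ : ℝ) : Fin 2 → ℝ := -(tA κ).mulVec (pv1 κ μ)

/-- v₄ = −Ãv₂. -/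
noncomputable def pv4 (κ : ℝ) : Fin 2 → ℝ := -(tA κ).mulVec pv2

/-- v₅ = −Ãv₃. -/
noncomputable def pv5 (κ μ : ℝ) : Fin 2 → ℝ := -(tA κ).mulVec (pv3 κ μ)

/-- v₆ = −B̃v₄. -/
noncomputable def pv6 (κ : ℝ) : Fin 2 → ℝ := -(tB κ).mulVec (pv4 κ)

/-- The twelve vertices v₁,…,v₁₂ (indexed 0,…,11), with v_{i+6} = −v_i. -/
noncomputable def vtx (κ μ : ℝ) : Fin 12 → Fin 2 → ℝ :=
  ![pv1 κ μ, pv2, pv3 κ μ, pv4 κ, pv5 κ μ, pv6 κ,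
    -pv1 κ μ, -pv2, -pv3 κ μ, -pv4 κ, -pv5 κ μ, -pv6 κ]

/-- T = [[0,−1],[1,0]]. -/
noncomputable def Trot : Matrix (Fin 2) (Fin 2) ℝ := !![0, -1; 1, 0]

/-- The polygon `S`. -/
noncomputable def polyS (κ μ : ℝ) : Set (Fin 2 → ℝ) := convexHull ℝ (Set.range (vtx κ μ))

lemma vtx_mem (κ μ : ℝ) (i : Fin 12) : vtx κ μ i ∈ polyS κ μ :=
  subset_convexHull ℝ _ ⟨i, rfl⟩

lemma polyS_neg {κ μ : ℝ} {x : Fin 2 → ℝ} (hx : x ∈ polyS κ μ) : -x ∈ polyS κ μ := by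
  have hsym : -Set.range (vtx κ μ) = Set.range (vtx κ μ) := by
    have hneg : ∀ i, ∃ j, vtx κ μ j = -vtx κ μ i := fun i => by
      refine ⟨i + 6, ?_⟩
      fin_cases i <;> simp [vtx]
    ext y
    constructor
    · rintro ⟨i, hi⟩
      obtain ⟨j, hj⟩ := hneg i
      exact ⟨j, by rw [hj, hi, neg_neg]⟩
    · rintro ⟨i, hi⟩
      obtain ⟨j, hj⟩ := hneg i
      exact ⟨j, by rw [hj, hi]⟩
  have h : -x ∈ -polyS κ μ := Set.neg_mem_neg.2 hx
  rwa [polyS, ← convexHull_neg, hsym] at h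

/-- `S` contains every subconvex combination of its points, since it contains the origin. -/
lemma polyS_comb {κ μ : ℝ} {x y : Fin 2 → ℝ} (hx : x ∈ polyS κ μ) (hy : y ∈ polyS κ μ)
    {α β : ℝ} (hα : 0 ≤ α) (hβ : 0 ≤ β) (hαβ : α + β ≤ 1) : α • x + β • y ∈ polyS κ μ := by
  have hc : Convex ℝ (polyS κ μ) := convex_convexHull ℝ _
  -- the missing weight `1 - α - β` is split equally between `x` and `-x`
  have h := hc.sum_mem (t := Finset.univ) (w := ![α + (1 - α - β) / 2, β, (1 - α - β) / 2])
    (z := ![x, y, -x]) (by intro i _; fin_cases i <;> simp <;> linarith)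
    (by simp [Fin.sum_univ_three]; ring)
    (by intro i _; fin_cases i <;> simp [hx, hy, polyS_neg hx])
  convert h using 1
  simp only [Fin.sum_univ_three, Matrix.cons_val]
  module

/-- A matrix mapping the six vertices `v₁, …, v₆` into `S` maps all twelve into `S`. -/
lemma all_of_six {κ μ : ℝ} (M : Matrix (Fin 2) (Fin 2) ℝ)
    (h1 : M.mulVec (pv1 κ μ) ∈ polyS κ μ) (h2 : M.mulVec pv2 ∈ polyS κ μ)
    (h3 : M.mulVec (pv3 κ μ) ∈ polyS κ μ) (h4 : M.mulVec (pv4 κ) ∈ polyS κ μ)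
    (h5 : M.mulVec (pv5 κ μ) ∈ polyS κ μ) (h6 : M.mulVec (pv6 κ) ∈ polyS κ μ) (i : Fin 12) :
    M.mulVec (vtx κ μ i) ∈ polyS κ μ := by
  fin_cases i
  · exact h1
  · exact h2
  · exact h3
  · exact h4
  · exact h5
  · exact h6
  · exact (Matrix.mulVec_neg (pv1 κ μ) M).symm ▸ polyS_neg h1
  · exact (Matrix.mulVec_neg pv2 M).symm ▸ polyS_neg h2
  · exact (Matrix.mulVec_neg (pv3 κ μ) M).symm ▸ polyS_neg h3
  · exact (Matrix.mulVec_neg (pv4 κ) M).symm ▸ polyS_neg h4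
  · exact (Matrix.mulVec_neg (pv5 κ μ) M).symm ▸ polyS_neg h5
  · exact (Matrix.mulVec_neg (pv6 κ) M).symm ▸ polyS_neg h6

lemma polyS_invariant {κ μ : ℝ} (M : Matrix (Fin 2) (Fin 2) ℝ)
    (h : ∀ i, M.mulVec (vtx κ μ i) ∈ polyS κ μ) : ∀ x ∈ polyS κ μ, M.mulVec x ∈ polyS κ μ := by
  have hc : Convex ℝ (M.mulVecLin ⁻¹' polyS κ μ) :=
    (convex_convexHull ℝ _).linear_preimage M.mulVecLin
  exact convexHull_min (by rintro _ ⟨i, rfl⟩; exact h i) hc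

/-! ### Coordinates of the vertices and their images -/

/-- The scaling factor `κ^(-2/3)`. -/
noncomputable def cf (κ : ℝ) : ℝ := κ ^ (-(2 : ℝ) / 3)

lemma tA_mulVec (κ x y : ℝ) :
    (tA κ).mulVec ![x, y] = ![-(cf κ * (y / κ)), cf κ * (κ * x - y)] := by
  ext i; fin_cases i <;> simp [tA, matA, cf] <;> ring

lemma tB_mulVec (κ x y : ℝ) :
    (tB κ).mulVec ![x, y] = ![-(cf κ * (κ * y)), cf κ * (x / κ - y)] := by
  ext i; fin_cases i <;> simp [tB, matB, cf] <;> ring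

lemma pv1_eq (κ μ : ℝ) : pv1 κ μ = ![μ, μ * (κ / (1 + κ ^ 2))] := by
  ext i; fin_cases i <;> simp [pv1]

lemma pv3_eq {κ : ℝ} (μ : ℝ) (h : 0 < κ) :
    pv3 κ μ = ![cf κ * μ / (1 + κ ^ 2), -(cf κ * μ * κ ^ 3 / (1 + κ ^ 2))] := by
  rw [pv3, pv1_eq, tA_mulVec]
  ext i; fin_cases i <;> simp <;> field_simp <;> ring

lemma pv4_eq (κ : ℝ) : pv4 κ = ![0, -(cf κ * κ)] := by
  rw [pv4, pv2, tA_mulVec]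
  ext i; fin_cases i <;> simp

lemma pv5_eq {κ : ℝ} (μ : ℝ) (h : 0 < κ) :
    pv5 κ μ = ![-(cf κ ^ 2 * μ * κ ^ 2 / (1 + κ ^ 2)), -(cf κ ^ 2 * μ * κ)] := by
  rw [pv5, pv3_eq μ h, tA_mulVec]
  ext i; fin_cases i <;> simp <;> field_simp

lemma pv6_eq (κ : ℝ) : pv6 κ = ![-(cf κ ^ 2 * κ ^ 2), -(cf κ ^ 2 * κ)] := by
  rw [pv6, pv4_eq, tB_mulVec]
  ext i; fin_cases i <;> simp <;> ring

lemma cf_pos {κ : ℝ} (h : 0 < κ) : 0 < cf κ := Real.rpow_pos_of_pos h _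

lemma cf_cube {κ : ℝ} (h : 0 < κ) : cf κ ^ 3 * κ ^ 2 = 1 := by
  rw [cf, ← Real.rpow_natCast, ← Real.rpow_mul h.le, ← Real.rpow_natCast κ 2, ← Real.rpow_add h]
  norm_num

lemma one_le_cf_mul {κ μ : ℝ} (h : 0 < κ) (hμ : κ ^ ((2 : ℝ) / 3) ≤ μ) : 1 ≤ cf κ * μ := by
  calc (1 : ℝ) = cf κ * κ ^ ((2 : ℝ) / 3) := by rw [cf, ← Real.rpow_add h]; norm_num
    _ ≤ cf κ * μ := mul_le_mul_of_nonneg_left hμ (cf_pos h).le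

/-! ### The four images that are not multiples of vertices -/

section images

variable {κ μ : ℝ}

lemma vtx_mem' : pv1 κ μ ∈ polyS κ μ ∧ pv2 ∈ polyS κ μ ∧ pv3 κ μ ∈ polyS κ μ ∧
    pv4 κ ∈ polyS κ μ ∧ pv5 κ μ ∈ polyS κ μ ∧ pv6 κ ∈ polyS κ μ :=
  ⟨vtx_mem κ μ 0, vtx_mem κ μ 1, vtx_mem κ μ 2, vtx_mem κ μ 3, vtx_mem κ μ 4, vtx_mem κ μ 5⟩

/-- A contraction by `κ⁻²` keeps points of `S` in `S`. -/
lemma shrink_mem (hκ : 1 < κ) {x : Fin 2 → ℝ} (hx : x ∈ polyS κ μ) :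
    (1 / κ ^ 2) • x ∈ polyS κ μ := by
  have h : 1 / κ ^ 2 ≤ 1 := by
    rw [div_le_one (by positivity)]; nlinarith
  have := polyS_comb hx hx (α := 1 / κ ^ 2) (β := 0) (by positivity) le_rfl (by simpa using h)
  simpa using this

lemma tA_pv4_mem (hκ : 1 < κ) (hμ : 1 ≤ μ) : (tA κ).mulVec (pv4 κ) ∈ polyS κ μ := by
  have h0 : 0 < κ := by linarith
  have hc := cf_cube h0
  have h4 : 1 < κ ^ 4 := one_lt_pow₀ hκ (by norm_num)
  obtain ⟨-, -, -, -, h5, h6⟩ := vtx_mem' (κ := κ) (μ := μ)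
  have hβ : (κ ^ 4 - 1) / (κ ^ 4 * μ) ≤ (κ ^ 4 - 1) / κ ^ 4 :=
    div_le_div_of_nonneg_left (by linarith) (by positivity)
      (le_mul_of_one_le_right (by positivity) hμ)
  have hsum : 1 / κ ^ 4 + (κ ^ 4 - 1) / κ ^ 4 = 1 := by field_simp; ring
  convert polyS_comb (polyS_neg h6) (polyS_neg h5) (α := 1 / κ ^ 4)
    (β := (κ ^ 4 - 1) / (κ ^ 4 * μ)) (by positivity)
    (div_nonneg (by linarith) (by positivity)) (by linarith) using 1
  rw [pv6_eq, pv5_eq μ h0, pv4_eq, tA_mulVec]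
  ext i; fin_cases i <;> simp <;> field_simp <;> ring

lemma tA_pv6_mem (hκ : 1 < κ) (hμ : 1 ≤ cf κ * μ) : (tA κ).mulVec (pv6 κ) ∈ polyS κ μ := by
  have h0 : 0 < κ := by linarith
  have hc := cf_cube h0
  have hcp := cf_pos h0
  have hμ0 : 0 < μ := pos_of_mul_pos_right (by linarith) hcp.le
  have h4 : 1 < κ ^ 4 := one_lt_pow₀ hκ (by norm_num)
  obtain ⟨-, h2, h3, -⟩ := vtx_mem' (κ := κ) (μ := μ)
  have hβ : (κ ^ 4 - 1) / (κ ^ 4 * (cf κ * μ)) ≤ (κ ^ 4 - 1) / κ ^ 4 :=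
    div_le_div_of_nonneg_left (by linarith) (by positivity)
      (le_mul_of_one_le_right (by positivity) hμ)
  have hsum : 1 / κ ^ 4 + (κ ^ 4 - 1) / κ ^ 4 = 1 := by field_simp; ring
  convert polyS_comb h2 h3 (α := 1 / κ ^ 4)
    (β := (κ ^ 4 - 1) / (κ ^ 4 * (cf κ * μ))) (by positivity)
    (div_nonneg (by linarith) (by positivity)) (by linarith) using 1
  rw [pv6_eq, pv3_eq μ h0, pv2, tA_mulVec]
  generalize cf κ = c at *
  ext i
  fin_cases i
  · simp; field_simp; linear_combination (κ ^ 2 + κ ^ 4) * hc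
  · simp; field_simp; linear_combination (1 - κ ^ 4) * hc

/-- The upper bound on `μ`, as the bound on the weights used for `B̃v₁` and `B̃v₃`. -/
lemma weight_le (hκ : 1 < κ) (hμ : μ ≤ (κ ^ 2 + 1) ^ 2 / (κ ^ 4 + κ ^ 2 + 1)) :
    μ * (κ ^ 6 - 1) / (κ ^ 4 * (κ ^ 2 + 1)) + 1 / κ ^ 4 ≤ 1 := by
  have h0 : 0 < κ := by linarith
  rw [le_div_iff₀ (by positivity)] at hμ
  have h2 : 0 < κ ^ 2 - 1 := by nlinarith
  have : μ * (κ ^ 6 - 1) / (κ ^ 4 * (κ ^ 2 + 1)) + 1 / κ ^ 4 =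
      (μ * (κ ^ 6 - 1) + (κ ^ 2 + 1)) / (κ ^ 4 * (κ ^ 2 + 1)) := by field_simp
  rw [this, div_le_one (by positivity)]
  nlinarith [mul_le_mul_of_nonneg_left hμ h2.le]

lemma tB_pv3_mem (hκ : 1 < κ) (hμ1 : 1 ≤ μ)
    (hμ : μ ≤ (κ ^ 2 + 1) ^ 2 / (κ ^ 4 + κ ^ 2 + 1)) :
    (tB κ).mulVec (pv3 κ μ) ∈ polyS κ μ := by
  have h0 : 0 < κ := by linarith
  have hc := cf_cube h0
  have h6 : 1 < κ ^ 6 := one_lt_pow₀ hκ (by norm_num)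
  obtain ⟨-, -, -, -, h5, h6'⟩ := vtx_mem' (κ := κ) (μ := μ)
  have hw := weight_le hκ hμ
  convert polyS_neg (polyS_comb h6' h5
    (div_nonneg (mul_nonneg (by linarith) (by linarith)) (by positivity)) (by positivity) hw)
    using 1
  rw [pv6_eq, pv5_eq μ h0, pv3_eq μ h0, tB_mulVec]
  ext i; fin_cases i <;> simp <;> field_simp <;> ring

lemma tB_pv1_mem (hκ : 1 < κ) (hμ1 : 1 ≤ μ)
    (hμ : μ ≤ (κ ^ 2 + 1) ^ 2 / (κ ^ 4 + κ ^ 2 + 1)) :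
    (tB κ).mulVec (pv1 κ μ) ∈ polyS κ μ := by
  have h0 : 0 < κ := by linarith
  have hcp := cf_pos h0
  have hc1 : cf κ ≤ 1 := Real.rpow_le_one_of_one_le_of_nonpos hκ.le (by norm_num)
  have h6 : 1 < κ ^ 6 := one_lt_pow₀ hκ (by norm_num)
  obtain ⟨-, h2, h3, -⟩ := vtx_mem' (κ := κ) (μ := μ)
  have hw := weight_le hκ hμ
  have hnn : 0 ≤ μ * (κ ^ 6 - 1) / (κ ^ 4 * (κ ^ 2 + 1)) :=
    div_nonneg (mul_nonneg (by linarith) (by linarith)) (by positivity)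
  have := mul_le_of_le_one_left hnn hc1
  convert polyS_neg (polyS_comb h2 h3 (mul_nonneg hcp.le hnn) (β := 1 / κ ^ 4) (by positivity)
    (by linarith)) using 1
  rw [pv1_eq, pv3_eq μ h0, pv2, tB_mulVec]
  ext i; fin_cases i <;> simp <;> field_simp <;> ring

/-! ### All images of vertices -/

lemma tA_vtx_mem (hκ : 1 < κ) (hμ1 : 1 ≤ μ) (hμ : 1 ≤ cf κ * μ) (i : Fin 12) :
    (tA κ).mulVec (vtx κ μ i) ∈ polyS κ μ := by
  have h0 : 0 < κ := by linarith
  have hc := cf_cube h0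
  obtain ⟨h1, -, h3, h4, h5, -⟩ := vtx_mem' (κ := κ) (μ := μ)
  refine all_of_six _ ?_ ?_ ?_ (tA_pv4_mem hκ hμ1) ?_ (tA_pv6_mem hκ hμ) i
  · simpa [pv3] using polyS_neg h3
  · simpa [pv4] using polyS_neg h4
  · simpa [pv5] using polyS_neg h5
  · -- `A³ = 1`, hence `Ãv₅ = Ã³v₁ = κ⁻² v₁`
    convert shrink_mem hκ h1 using 1
    rw [pv5_eq μ h0, pv1_eq, tA_mulVec]
    generalize cf κ = c at *
    ext i
    fin_cases i
    · simp; field_simp; linear_combination hc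
    · simp; field_simp; linear_combination hc

lemma tB_vtx_mem (hκ : 1 < κ) (hμ1 : 1 ≤ μ)
    (hμ : μ ≤ (κ ^ 2 + 1) ^ 2 / (κ ^ 4 + κ ^ 2 + 1)) (i : Fin 12) :
    (tB κ).mulVec (vtx κ μ i) ∈ polyS κ μ := by
  have h0 : 0 < κ := by linarith
  have hc := cf_cube h0
  obtain ⟨h1, h2, -, h4, -, h6⟩ := vtx_mem' (κ := κ) (μ := μ)
  refine all_of_six _ (tB_pv1_mem hκ hμ1 hμ) ?_ (tB_pv3_mem hκ hμ1 hμ) ?_ ?_ ?_ i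
  · convert shrink_mem hκ (polyS_neg h4) using 1
    rw [pv2, pv4_eq, tB_mulVec]
    ext i; fin_cases i <;> simp <;> field_simp
  · simpa [pv6] using polyS_neg h6
  · -- `B̃v₅ = v₁`
    convert h1 using 1
    rw [pv5_eq μ h0, pv1_eq, tB_mulVec]
    generalize cf κ = c at *
    ext i
    fin_cases i
    · simp; linear_combination μ * hc
    · simp; field_simp; linear_combination hc
  · -- `B̃v₆ = v₂`
    convert h2 using 1
    rw [pv6_eq, pv2, tB_mulVec]
    generalize cf κ = c at *
    ext i
    fin_cases i
    · simp; linear_combination hc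
    · simp; right; field_simp; ring

end images

/-- for κ > 1 and κ^{2/3} ≤ μ ≤ (κ²+1)²/(κ⁴+κ²+1), with
S = conv{v₁,…,v₁₂}, one has Ãv_i ∈ S and B̃v_i ∈ S for all i, and consequently
Ã(S) ⊆ S and B̃(S) ⊆ S. -/
theorem polygon_invariant (κ μ : ℝ) (hκ : 1 < κ)
    (hμ1 : κ ^ ((2 : ℝ) / 3) ≤ μ)
    (hμ2 : μ ≤ (κ ^ 2 + 1) ^ 2 / (κ ^ 4 + κ ^ 2 + 1)) :
    (∀ i : Fin 12,
      (tA κ).mulVec (vtx κ μ i) ∈ convexHull ℝ (Set.range (vtx κ μ))) ∧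
    (∀ i : Fin 12,
      (tB κ).mulVec (vtx κ μ i) ∈ convexHull ℝ (Set.range (vtx κ μ))) ∧
    (∀ x ∈ convexHull ℝ (Set.range (vtx κ μ)),
      (tA κ).mulVec x ∈ convexHull ℝ (Set.range (vtx κ μ))) ∧
    (∀ x ∈ convexHull ℝ (Set.range (vtx κ μ)),
      (tB κ).mulVec x ∈ convexHull ℝ (Set.range (vtx κ μ))) := by
  have h0 : 0 < κ := by linarith
  have hμ : 1 ≤ μ := (Real.one_le_rpow hκ.le (by norm_num)).trans hμ1
  have hA := tA_vtx_mem hκ hμ (one_le_cf_mul h0 hμ1)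
  have hB := tB_vtx_mem hκ hμ hμ2
  exact ⟨hA, hB, polyS_invariant _ hA, polyS_invariant _ hB⟩
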